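/- arXiv:2509.09287 — 7 statements merged into one kernel-verified Lean document; each statement's English description precedes it below -/
import Mathlib

section
/- Let X be a real Banach space, let f : X → ℝ be locally Lipschitz, and let x, v ∈ X. Then the Clarke generalized directional derivative is realized as a maximum over the Clarke subdifferential: there exists ζ ∈ ∂f(x) with ⟨ζ, v⟩ = f⁰(x; v), and consequently f⁰(x; v) = max_{ζ ∈ ∂f(x)} ⟨ζ, v⟩. -/
open Filter Topology

/-- The Clarke generalized directional derivative of `f` at `x` in the direction `v`:
`f⁰(x; v) = limsup_{y → x, λ ↓ 0} (f (y + λ v) - f y) / λ`. -/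
noncomputable def clarkeDeriv {X : Type*} [NormedAddCommGroup X] [NormedSpace ℝ X]
    (f : X → ℝ) (x v : X) : ℝ :=
  Filter.limsup (fun p : X × ℝ => (f (p.1 + p.2 • v) - f p.1) / p.2)
    ((𝓝 x) ×ˢ (𝓝[>] (0 : ℝ)))

/-- The Clarke subdifferential of `f` at `x`, a subset of the continuous dual of `X`:
`∂f(x) = {ζ ∈ X* : ⟨ζ, v⟩ ≤ f⁰(x; v) for all v}`. -/
def clarkeSubdiff {X : Type*} [NormedAddCommGroup X] [NormedSpace ℝ X]
    (f : X → ℝ) (x : X) : Set (X →L[ℝ] ℝ) :=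
  {ζ | ∀ v : X, ζ v ≤ clarkeDeriv f x v}

namespace ClarkeAux

variable {X : Type*} [NormedAddCommGroup X] [NormedSpace ℝ X]

lemma tendsto_shift (x w : X) :
    Tendsto (fun p : X × ℝ => (p.1 + p.2 • w, p.2)) ((𝓝 x) ×ˢ (𝓝[>] (0 : ℝ)))
      ((𝓝 x) ×ˢ (𝓝[>] (0 : ℝ))) := by
  refine Tendsto.prodMk ?_ tendsto_snd
  have h2 : Tendsto (fun p : X × ℝ => p.2) ((𝓝 x) ×ˢ (𝓝[>] (0 : ℝ))) (𝓝 0) :=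
    tendsto_snd.mono_right nhdsWithin_le_nhds
  have h1 : Tendsto (fun p : X × ℝ => p.1) ((𝓝 x) ×ˢ (𝓝[>] (0 : ℝ))) (𝓝 x) := tendsto_fst
  simpa using h1.add (h2.smul_const w)

lemma ev_pos (x : X) : ∀ᶠ p : X × ℝ in (𝓝 x) ×ˢ (𝓝[>] (0 : ℝ)), 0 < p.2 :=
  tendsto_snd.eventually (self_mem_nhdsWithin : ∀ᶠ t : ℝ in 𝓝[>] (0:ℝ), t ∈ Set.Ioi (0:ℝ))

lemma bound {f : X → ℝ} (hf : LocallyLipschitz f) (x : X) : ∃ K : ℝ, ∀ v : X,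
    ∀ᶠ p : X × ℝ in (𝓝 x) ×ˢ (𝓝[>] (0 : ℝ)),
      |(f (p.1 + p.2 • v) - f p.1) / p.2| ≤ K * ‖v‖ := by
  obtain ⟨K, t, ht, hK⟩ := hf x
  refine ⟨K, fun v => ?_⟩
  have h1 : ∀ᶠ p : X × ℝ in (𝓝 x) ×ˢ (𝓝[>] (0 : ℝ)), p.1 ∈ t := tendsto_fst.eventually ht
  have h2 := (tendsto_shift x v).eventually h1
  filter_upwards [h1, h2, ev_pos x] with p h1 h2 h3
  have := hK.dist_le_mul _ h2 _ h1
  rw [Real.dist_eq, dist_eq_norm, add_sub_cancel_left, norm_smul, Real.norm_eq_abs,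
    abs_of_pos h3] at this
  rw [abs_div, abs_of_pos h3, div_le_iff₀ h3]
  linarith

lemma deriv_le {f : X → ℝ} (hf : LocallyLipschitz f) {x v : X} {c : ℝ}
    (h : ∀ᶠ p : X × ℝ in (𝓝 x) ×ˢ (𝓝[>] (0 : ℝ)), (f (p.1 + p.2 • v) - f p.1) / p.2 ≤ c) :
    clarkeDeriv f x v ≤ c := by
  obtain ⟨K, hK⟩ := bound hf x
  refine limsup_le_of_le ?_ h
  refine IsBoundedUnder.isCoboundedUnder_le ⟨-(K * ‖v‖), ?_⟩
  rw [eventually_map]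
  exact (hK v).mono fun p hp => (abs_le.1 hp).1

lemma ev_lt {f : X → ℝ} (hf : LocallyLipschitz f) {x v : X} {c : ℝ} (h : clarkeDeriv f x v < c) :
    ∀ᶠ p : X × ℝ in (𝓝 x) ×ˢ (𝓝[>] (0 : ℝ)), (f (p.1 + p.2 • v) - f p.1) / p.2 < c := by
  obtain ⟨K, hK⟩ := bound hf x
  refine eventually_lt_of_limsup_lt h ⟨K * ‖v‖, ?_⟩
  rw [eventually_map]
  exact (hK v).mono fun p hp => (abs_le.1 hp).2

lemma deriv_add {f : X → ℝ} (hf : LocallyLipschitz f) (x v w : X) :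
    clarkeDeriv f x (v + w) ≤ clarkeDeriv f x v + clarkeDeriv f x w := by
  refine le_of_forall_pos_le_add fun ε hε => deriv_le hf ?_
  have h1 := (tendsto_shift x w).eventually
    (ev_lt hf (show clarkeDeriv f x v < clarkeDeriv f x v + ε / 2 by linarith))
  have h2 := ev_lt hf (show clarkeDeriv f x w < clarkeDeriv f x w + ε / 2 by linarith)
  filter_upwards [h1, h2] with p h1 h2
  have e : p.1 + p.2 • (v + w) = p.1 + p.2 • w + p.2 • v := by rw [smul_add]; abel
  have e2 : (f (p.1 + p.2 • (v + w)) - f p.1) / p.2 =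
    (f (p.1 + p.2 • w + p.2 • v) - f (p.1 + p.2 • w)) / p.2
      + (f (p.1 + p.2 • w) - f p.1) / p.2 := by rw [e]; ring
  rw [e2]
  linarith

lemma deriv_smul_le {f : X → ℝ} (hf : LocallyLipschitz f) (x : X) (c : ℝ) (hc : 0 < c) (v : X) :
    clarkeDeriv f x (c • v) ≤ c * clarkeDeriv f x v := by
  refine le_of_forall_pos_le_add fun ε hε => deriv_le hf ?_
  have ht : Tendsto (fun t : ℝ => c * t) (𝓝[>] 0) (𝓝[>] 0) := by
    refine tendsto_nhdsWithin_iff.2 ⟨?_, ?_⟩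
    · have : Tendsto (fun t : ℝ => c * t) (𝓝 0) (𝓝 (c * 0)) := tendsto_id.const_mul c
      rw [mul_zero] at this
      exact this.mono_left nhdsWithin_le_nhds
    · filter_upwards [self_mem_nhdsWithin] with t ht
      exact mul_pos hc ht
  have h1 := ((tendsto_id (x := 𝓝 x)).prodMap ht).eventually
    (ev_lt hf (show clarkeDeriv f x v < clarkeDeriv f x v + ε / c by
      have := div_pos hε hc; linarith))
  filter_upwards [h1, ev_pos x] with p h1 h2
  simp only [Prod.map, id] at h1
  have e : p.2 • c • v = (c * p.2) • v := by rw [smul_smul, mul_comm]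
  rw [e]
  rw [div_lt_iff₀ (mul_pos hc h2)] at h1
  rw [div_le_iff₀ h2]
  refine h1.le.trans (le_of_eq ?_)
  field_simp

lemma deriv_smul {f : X → ℝ} (hf : LocallyLipschitz f) (x : X) (c : ℝ) (hc : 0 < c) (v : X) :
    clarkeDeriv f x (c • v) = c * clarkeDeriv f x v := by
  refine le_antisymm (deriv_smul_le hf x c hc v) ?_
  have := deriv_smul_le hf x c⁻¹ (inv_pos.2 hc) (c • v)
  rw [inv_smul_smul₀ hc.ne'] at this
  rwa [inv_mul_eq_div, le_div_iff₀ hc, mul_comm] at this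

end ClarkeAux

/-- The Clarke generalized directional derivative is attained as the maximum of `⟨ζ, v⟩`
over the Clarke subdifferential: `f⁰(x; v) = max_{ζ ∈ ∂f(x)} ⟨ζ, v⟩`. -/
theorem clarkeDeriv_eq_max_clarkeSubdiff
    {X : Type*} [NormedAddCommGroup X] [NormedSpace ℝ X] [CompleteSpace X]
    (f : X → ℝ) (hf : LocallyLipschitz f) (x v : X) :
    IsGreatest ((fun ζ : X →L[ℝ] ℝ => ζ v) '' clarkeSubdiff f x) (clarkeDeriv f x v) := by
  refine ⟨?_, ?_⟩
  swap
  · rintro _ ⟨ζ, hζ, rfl⟩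
    exact hζ v
  have hadd := ClarkeAux.deriv_add hf x
  have hsm := ClarkeAux.deriv_smul hf x
  have h0 : clarkeDeriv f x 0 = 0 := by
    have := hsm 2 (by norm_num) 0
    rw [smul_zero] at this
    linarith
  have key : ∀ c : ℝ, c * clarkeDeriv f x v ≤ clarkeDeriv f x (c • v) := by
    intro c
    rcases lt_trichotomy c 0 with hc | hc | hc
    · have h1 := hadd (c • v) ((-c) • v)
      rw [hsm (-c) (by linarith) v, ← add_smul, add_neg_cancel, zero_smul, h0] at h1
      linarith
    · simp [hc, h0]
    · exact (hsm c hc v).ge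
  have H : ∀ c : ℝ, c • v = 0 → c • clarkeDeriv f x v = 0 := by
    intro c hc
    rcases smul_eq_zero.1 hc with h | h
    · simp [h]
    · simp [h, h0]
  obtain ⟨g, hg, hgN⟩ := exists_extension_of_le_sublinear
    (LinearPMap.mkSpanSingleton' v (clarkeDeriv f x v) H) (clarkeDeriv f x) hsm hadd (by
      rintro ⟨w, hw⟩
      obtain ⟨c, rfl⟩ := Submodule.mem_span_singleton.1 hw
      rw [LinearPMap.mkSpanSingleton'_apply]
      exact key c)
  obtain ⟨K, hK⟩ := ClarkeAux.bound hf x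
  have hle : ∀ w, g w ≤ K * ‖w‖ := fun w =>
    (hgN w).trans (ClarkeAux.deriv_le hf ((hK w).mono fun p hp => (abs_le.1 hp).2))
  refine ⟨g.mkContinuous K fun w => ?_, fun w => hgN w, ?_⟩
  · rw [Real.norm_eq_abs, abs_le]
    have := hle (-w)
    rw [map_neg, norm_neg] at this
    exact ⟨by linarith, hle w⟩
  · have h := hg ⟨v, Submodule.mem_span_singleton_self v⟩
    exact h.trans (LinearPMap.mkSpanSingleton'_apply_self v _ H _)
end

section
/- Let j : ℝ^d → ℝ be locally Lipschitz and let δ₁ ≥ 0. Then the following two conditions are equivalent: (a) relaxed monotonicity: for all ξ₁, ξ₂ ∈ ℝ^d and all η₁ ∈ ∂j(ξ₁), η₂ ∈ ∂j(ξ₂) one has (η₁ − η₂)·(ξ₁ − ξ₂) ≥ −δ₁|ξ₁ − ξ₂|²; (b) for all ξ₁, ξ₂ ∈ ℝ^d, j⁰(ξ₁; ξ₂ − ξ₁) + j⁰(ξ₂; ξ₁ − ξ₂) ≤ δ₁|ξ₁ − ξ₂|². -/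
open Filter Topology
open scoped RealInnerProductSpace

/-- The Clarke subdifferential of `f` at `x`, identified with a subset of the space itself
via the inner product: `∂f(x) = {η : ⟪η, v⟫ ≤ f⁰(x; v) for all v}`. -/
def clarkeSubdiffInner {X : Type*} [NormedAddCommGroup X] [InnerProductSpace ℝ X]
    (f : X → ℝ) (x : X) : Set X :=
  {η | ∀ v : X, ⟪η, v⟫ ≤ clarkeDeriv f x v}

section Helpers

variable {X : Type*} [NormedAddCommGroup X] [NormedSpace ℝ X]

lemma clarke_shift_tendsto (x v : X) :
    Tendsto (fun p : X × ℝ => p.1 + p.2 • v) ((𝓝 x) ×ˢ (𝓝[>] (0 : ℝ))) (𝓝 x) := by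
  have h1 : Tendsto (fun p : X × ℝ => p.1 + p.2 • v) (𝓝 (x, (0:ℝ))) (𝓝 (x + (0:ℝ) • v)) :=
    Continuous.tendsto (by fun_prop) (x, (0:ℝ))
  rw [zero_smul, add_zero, nhds_prod_eq] at h1
  exact h1.mono_left (Filter.prod_mono le_rfl nhdsWithin_le_nhds)

lemma clarke_pos (x : X) :
    ∀ᶠ p : X × ℝ in (𝓝 x) ×ˢ (𝓝[>] (0 : ℝ)), 0 < p.2 := by
  have h : ∀ᶠ t in 𝓝[>] (0 : ℝ), 0 < t := self_mem_nhdsWithin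
  exact tendsto_snd.eventually h

lemma clarke_bdd {f : X → ℝ} (hf : LocallyLipschitz f) (x v : X) :
    ∃ M : ℝ, ∀ᶠ p : X × ℝ in (𝓝 x) ×ˢ (𝓝[>] (0 : ℝ)),
      |(f (p.1 + p.2 • v) - f p.1) / p.2| ≤ M := by
  obtain ⟨K, t, ht, hK⟩ := hf x
  refine ⟨K * ‖v‖, ?_⟩
  filter_upwards [clarke_pos x, (clarke_shift_tendsto x v).eventually ht,
    tendsto_fst.eventually ht] with p hp h1 h2
  have := hK.dist_le_mul _ h1 _ h2
  rw [Real.dist_eq, dist_eq_norm, add_sub_cancel_left, norm_smul, Real.norm_eq_abs,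
    abs_of_pos hp] at this
  rw [abs_div, abs_of_pos hp, div_le_iff₀ hp]
  linarith

lemma clarke_ev_lt {f : X → ℝ} (hf : LocallyLipschitz f) {x v : X} {a : ℝ}
    (h : clarkeDeriv f x v < a) :
    ∀ᶠ p : X × ℝ in (𝓝 x) ×ˢ (𝓝[>] (0 : ℝ)), (f (p.1 + p.2 • v) - f p.1) / p.2 < a := by
  obtain ⟨M, hM⟩ := clarke_bdd hf x v
  exact eventually_lt_of_limsup_lt h
    ⟨M, by simpa using hM.mono fun p hp => (abs_le.1 hp).2⟩

lemma clarke_le {f : X → ℝ} (hf : LocallyLipschitz f) {x v : X} {a : ℝ}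
    (h : ∀ᶠ p : X × ℝ in (𝓝 x) ×ˢ (𝓝[>] (0 : ℝ)), (f (p.1 + p.2 • v) - f p.1) / p.2 ≤ a) :
    clarkeDeriv f x v ≤ a := by
  obtain ⟨M, hM⟩ := clarke_bdd hf x v
  refine limsup_le_of_le ?_ h
  have hb : IsBoundedUnder (· ≥ ·) ((𝓝 x) ×ˢ (𝓝[>] (0 : ℝ)))
      (fun p : X × ℝ => (f (p.1 + p.2 • v) - f p.1) / p.2) :=
    ⟨-M, by simpa using hM.mono fun p hp => (abs_le.1 hp).1⟩
  exact hb.isCoboundedUnder_le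

lemma clarke_add {f : X → ℝ} (hf : LocallyLipschitz f) (x v w : X) :
    clarkeDeriv f x (v + w) ≤ clarkeDeriv f x v + clarkeDeriv f x w := by
  refine le_of_forall_pos_le_add fun ε hε => ?_
  have h1 := clarke_ev_lt hf (show clarkeDeriv f x v < clarkeDeriv f x v + ε / 2 by linarith)
  have h2 := clarke_ev_lt hf (show clarkeDeriv f x w < clarkeDeriv f x w + ε / 2 by linarith)
  have h3 := ((clarke_shift_tendsto x v).prodMk
    (tendsto_snd (f := 𝓝 x) (g := 𝓝[>] (0 : ℝ)))).eventually h2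
  apply clarke_le hf
  filter_upwards [h1, h3] with p hp hq
  have e : p.1 + p.2 • (v + w) = p.1 + p.2 • v + p.2 • w := by rw [smul_add, add_assoc]
  rw [e]
  have e2 : (f (p.1 + p.2 • v + p.2 • w) - f p.1) / p.2 =
    (f (p.1 + p.2 • v + p.2 • w) - f (p.1 + p.2 • v)) / p.2 +
      (f (p.1 + p.2 • v) - f p.1) / p.2 := by ring
  rw [e2]
  linarith

lemma clarke_smul_le {f : X → ℝ} (hf : LocallyLipschitz f) (x : X) (c : ℝ) (hc : 0 < c) (v : X) :
    clarkeDeriv f x (c • v) ≤ c * clarkeDeriv f x v := by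
  refine le_of_forall_pos_le_add fun ε hε => ?_
  have h1 := clarke_ev_lt hf (show clarkeDeriv f x v < clarkeDeriv f x v + ε / c by
    have := div_pos hε hc
    linarith)
  have ht : Tendsto (fun t : ℝ => t * c) (𝓝[>] 0) (𝓝[>] 0) := by
    refine tendsto_nhdsWithin_iff.2 ⟨?_, ?_⟩
    · have : Tendsto (fun t : ℝ => t * c) (𝓝 0) (𝓝 (0 * c)) :=
        Continuous.tendsto (by fun_prop) _
      rw [zero_mul] at this
      exact this.mono_left nhdsWithin_le_nhds
    · filter_upwards [self_mem_nhdsWithin] with t ht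
      exact mul_pos ht hc
  have h3 := ((tendsto_fst (f := 𝓝 x) (g := 𝓝[>] (0 : ℝ))).prodMk
    (ht.comp tendsto_snd)).eventually h1
  apply clarke_le hf
  filter_upwards [h3, clarke_pos x] with p hp hpos
  simp only [Function.comp] at hp
  rw [smul_smul]
  rw [div_lt_iff₀ (mul_pos hpos hc)] at hp
  rw [div_le_iff₀ hpos]
  have : (clarkeDeriv f x v + ε / c) * (p.2 * c) = (c * clarkeDeriv f x v + ε) * p.2 := by
    field_simp
  linarith

lemma clarke_smul {f : X → ℝ} (hf : LocallyLipschitz f) (x : X) (c : ℝ) (hc : 0 < c) (v : X) :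
    clarkeDeriv f x (c • v) = c * clarkeDeriv f x v := by
  apply le_antisymm (clarke_smul_le hf x c hc v)
  have h := clarke_smul_le hf x c⁻¹ (inv_pos.2 hc) (c • v)
  rw [smul_smul, inv_mul_cancel₀ hc.ne', one_smul] at h
  have := mul_le_mul_of_nonneg_left h hc.le
  rwa [← mul_assoc, mul_inv_cancel₀ hc.ne', one_mul] at this

lemma clarke_zero {f : X → ℝ} (hf : LocallyLipschitz f) (x : X) : clarkeDeriv f x 0 = 0 := by
  have := clarke_smul hf x 2 (by norm_num) 0
  rw [smul_zero] at this
  linarith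

end Helpers

lemma clarke_exists {X : Type*} [NormedAddCommGroup X] [InnerProductSpace ℝ X]
    [FiniteDimensional ℝ X] {f : X → ℝ} (hf : LocallyLipschitz f) (x v : X) :
    ∃ η ∈ clarkeSubdiffInner f x, ⟪η, v⟫ = clarkeDeriv f x v := by
  have hz : ∀ c : ℝ, c • v = 0 → c • clarkeDeriv f x v = 0 := by
    intro c h
    rcases smul_eq_zero.1 h with h | h
    · simp [h]
    · simp [h, clarke_zero hf]
  obtain ⟨g, hg1, hg2⟩ := exists_extension_of_le_sublinear
    (LinearPMap.mkSpanSingleton' v (clarkeDeriv f x v) hz) (clarkeDeriv f x)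
    (clarke_smul hf x) (clarke_add hf x) (by
      rintro ⟨y, hy⟩
      obtain ⟨c, rfl⟩ := Submodule.mem_span_singleton.1 hy
      rw [LinearPMap.mkSpanSingleton'_apply]
      simp only [smul_eq_mul, RingHom.id_apply]
      rcases lt_trichotomy c 0 with h | h | h
      · have h1 := clarke_add hf x (c • v) ((-c) • v)
        rw [← add_smul, add_neg_cancel, zero_smul, clarke_zero hf,
          clarke_smul hf x (-c) (by linarith)] at h1
        linarith
      · simp [h, clarke_zero hf]
      · rw [clarke_smul hf x c h])
  have key : ∀ y, ⟪(InnerProductSpace.toDual ℝ X).symm (LinearMap.toContinuousLinearMap g), y⟫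
      = g y := fun y => by simp
  refine ⟨_, fun y => (key y).trans_le (hg2 y), (key v).trans ?_⟩
  have := hg1 ⟨v, Submodule.mem_span_singleton_self v⟩
  exact this.trans (LinearPMap.mkSpanSingleton'_apply_self v _ hz _)

/-- Relaxed monotonicity of the Clarke subdifferential of a locally Lipschitz
`j : ℝ^d → ℝ` is equivalent to the two-point bound on Clarke directional derivatives. -/
theorem relaxedMonotone_iff_clarkeDeriv_bound {d : ℕ}
    (j : EuclideanSpace ℝ (Fin d) → ℝ) (hj : LocallyLipschitz j)
    (δ₁ : ℝ) (hδ₁ : 0 ≤ δ₁) :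
    (∀ ξ₁ ξ₂ : EuclideanSpace ℝ (Fin d),
      ∀ η₁ ∈ clarkeSubdiffInner j ξ₁, ∀ η₂ ∈ clarkeSubdiffInner j ξ₂,
        ⟪η₁ - η₂, ξ₁ - ξ₂⟫ ≥ -δ₁ * ‖ξ₁ - ξ₂‖ ^ 2) ↔
    (∀ ξ₁ ξ₂ : EuclideanSpace ℝ (Fin d),
      clarkeDeriv j ξ₁ (ξ₂ - ξ₁) + clarkeDeriv j ξ₂ (ξ₁ - ξ₂) ≤ δ₁ * ‖ξ₁ - ξ₂‖ ^ 2) := by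
  have key : ∀ ξ₁ ξ₂ η₁ η₂ : EuclideanSpace ℝ (Fin d),
      ⟪η₁ - η₂, ξ₁ - ξ₂⟫ = -(⟪η₁, ξ₂ - ξ₁⟫ + ⟪η₂, ξ₁ - ξ₂⟫) := by
    intro ξ₁ ξ₂ η₁ η₂
    simp only [inner_sub_left, inner_sub_right]
    ring
  constructor
  · intro h ξ₁ ξ₂
    obtain ⟨η₁, h1, e1⟩ := clarke_exists hj ξ₁ (ξ₂ - ξ₁)
    obtain ⟨η₂, h2, e2⟩ := clarke_exists hj ξ₂ (ξ₁ - ξ₂)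
    have := h ξ₁ ξ₂ η₁ h1 η₂ h2
    rw [key, e1, e2] at this
    linarith
  · intro h ξ₁ ξ₂ η₁ h1 η₂ h2
    have := h ξ₁ ξ₂
    have a1 := h1 (ξ₂ - ξ₁)
    have a2 := h2 (ξ₁ - ξ₂)
    rw [key]
    linarith
end

section
/- Let O be a bounded open subset of ℝ^d, let r ≥ 1 be real, and let u, v ∈ L^{r+1}(O; ℝ^d). Then the function x ↦ (|u(x)|^{r−1}u(x) − |v(x)|^{r−1}v(x))·(u(x) − v(x)) is integrable on O and ∫_O (|u|^{r−1}u − |v|^{r−1}v)·(u − v) dx ≥ (1/2)∫_O |u|^{r−1}|u − v|² dx + (1/2)∫_O |v|^{r−1}|u − v|² dx ≥ 0. -/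
open Filter Topology MeasureTheory
open scoped RealInnerProductSpace

lemma mono_pow_aux {E : Type*} [NormedAddCommGroup E] [InnerProductSpace ℝ E] (r : ℝ)
    (hr : 1 ≤ r) (x y : E) :
    (1 / 2) * (‖x‖ ^ (r - 1) * ‖x - y‖ ^ 2) + (1 / 2) * (‖y‖ ^ (r - 1) * ‖x - y‖ ^ 2) ≤
      ⟪(‖x‖ ^ (r - 1)) • x - (‖y‖ ^ (r - 1)) • y, x - y⟫ := by
  have h : 0 ≤ (‖x‖ ^ (r - 1) - ‖y‖ ^ (r - 1)) * (‖x‖ ^ 2 - ‖y‖ ^ 2) := by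
    rcases le_total ‖x‖ ‖y‖ with h | h
    · have h1 := Real.rpow_le_rpow (norm_nonneg x) h (sub_nonneg.2 hr)
      have h2 := pow_le_pow_left₀ (norm_nonneg x) h 2
      exact mul_nonneg_of_nonpos_of_nonpos (by linarith) (by linarith)
    · have h1 := Real.rpow_le_rpow (norm_nonneg y) h (sub_nonneg.2 hr)
      have h2 := pow_le_pow_left₀ (norm_nonneg y) h 2
      exact mul_nonneg (by linarith) (by linarith)
  rw [norm_sub_sq_real]
  simp only [inner_sub_left, inner_sub_right, real_inner_smul_left,
    real_inner_self_eq_norm_sq, real_inner_comm x y]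
  linarith

lemma mono_pow_bound {a b c r : ℝ} (hr : 1 ≤ r) (ha : 0 ≤ a) (hb : 0 ≤ b) (hc : 0 ≤ c)
    (hcb : c ≤ a + b) :
    a ^ (r - 1) * c ^ 2 ≤ (a + b) ^ (r + 1) := by
  have e : (a + b) ^ (r + 1) = (a + b) ^ (r - 1) * (a + b) ^ 2 := by
    rw [← Real.rpow_natCast (a + b) 2, ← Real.rpow_add' (by positivity) (by push_cast; linarith)]
    congr 1; push_cast; ring
  rw [e]
  have := Real.rpow_le_rpow ha (le_add_of_nonneg_right hb) (sub_nonneg.2 hr)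
  gcongr

lemma mono_pow_bound2 {E : Type*} [NormedAddCommGroup E] [InnerProductSpace ℝ E] {r : ℝ}
    (hr : 1 ≤ r) (x y : E) :
    ‖⟪(‖x‖ ^ (r - 1)) • x - (‖y‖ ^ (r - 1)) • y, x - y⟫‖ ≤ 2 * (‖x‖ + ‖y‖) ^ (r + 1) := by
  have h1 := mono_pow_bound (c := ‖x‖ + ‖y‖) hr (norm_nonneg x) (norm_nonneg y)
    (by positivity) le_rfl
  have h2 := mono_pow_bound (c := ‖x‖ + ‖y‖) hr (norm_nonneg y) (norm_nonneg x)
    (by positivity) (by linarith)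
  rw [add_comm ‖y‖] at h2
  have hx : 0 ≤ ‖x‖ ^ (r - 1) := by positivity
  have hy : 0 ≤ ‖y‖ ^ (r - 1) := by positivity
  calc _ ≤ ‖(‖x‖ ^ (r - 1)) • x - (‖y‖ ^ (r - 1)) • y‖ * ‖x - y‖ := norm_inner_le_norm _ _
    _ ≤ (‖x‖ ^ (r - 1) * ‖x‖ + ‖y‖ ^ (r - 1) * ‖y‖) * (‖x‖ + ‖y‖) := by
        gcongr
        · refine (norm_sub_le _ _).trans_eq ?_
          rw [norm_smul, norm_smul, Real.norm_of_nonneg hx, Real.norm_of_nonneg hy]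
        · exact norm_sub_le _ _
    _ ≤ (‖x‖ ^ (r - 1) * (‖x‖ + ‖y‖) + ‖y‖ ^ (r - 1) * (‖x‖ + ‖y‖)) * (‖x‖ + ‖y‖) := by
        gcongr <;> simp
    _ ≤ _ := by linarith

/-- Strong monotonicity of `u ↦ |u|^{r-1}u` in integrated form: for
`u, v ∈ L^{r+1}(O; ℝ^d)`, the integrand `(|u|^{r-1}u − |v|^{r-1}v)·(u − v)` is
integrable and its integral dominates
`(1/2)∫|u|^{r-1}|u−v|² + (1/2)∫|v|^{r-1}|u−v|² ≥ 0`. -/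
theorem monotonicity_power_nonlinearity {d : ℕ}
    (O : Set (EuclideanSpace ℝ (Fin d))) (hO : IsOpen O) (hOb : Bornology.IsBounded O)
    (r : ℝ) (hr : 1 ≤ r)
    (u v : EuclideanSpace ℝ (Fin d) → EuclideanSpace ℝ (Fin d))
    (hu : MemLp u (ENNReal.ofReal (r + 1)) (volume.restrict O))
    (hv : MemLp v (ENNReal.ofReal (r + 1)) (volume.restrict O)) :
    Integrable
      (fun x => ⟪(‖u x‖ ^ (r - 1)) • u x - (‖v x‖ ^ (r - 1)) • v x, u x - v x⟫)
      (volume.restrict O) ∧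
    (∫ x, ⟪(‖u x‖ ^ (r - 1)) • u x - (‖v x‖ ^ (r - 1)) • v x, u x - v x⟫
        ∂(volume.restrict O) ≥
      (1 / 2) * ∫ x, ‖u x‖ ^ (r - 1) * ‖u x - v x‖ ^ 2 ∂(volume.restrict O)
        + (1 / 2) * ∫ x, ‖v x‖ ^ (r - 1) * ‖u x - v x‖ ^ 2 ∂(volume.restrict O)) ∧
    ((1 / 2) * ∫ x, ‖u x‖ ^ (r - 1) * ‖u x - v x‖ ^ 2 ∂(volume.restrict O)
        + (1 / 2) * ∫ x, ‖v x‖ ^ (r - 1) * ‖u x - v x‖ ^ 2 ∂(volume.restrict O) ≥ 0) := by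
  have hM : Integrable (fun x => (‖u x‖ + ‖v x‖) ^ (r + 1)) (volume.restrict O) := by
    have h := (hu.norm.add hv.norm).integrable_norm_rpow (by simp; linarith) (by simp)
    rw [ENNReal.toReal_ofReal (by linarith)] at h
    refine h.congr (Eventually.of_forall fun x => ?_)
    simp only [Pi.add_apply]
    rw [Real.norm_of_nonneg (by positivity)]
  have mu : AEStronglyMeasurable (fun x => ‖u x‖ ^ (r - 1)) (volume.restrict O) :=
    (hu.1.norm.aemeasurable.pow_const _).aestronglyMeasurable
  have mv : AEStronglyMeasurable (fun x => ‖v x‖ ^ (r - 1)) (volume.restrict O) :=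
    (hv.1.norm.aemeasurable.pow_const _).aestronglyMeasurable
  have md := hu.1.sub hv.1
  have I1 : Integrable (fun x => ‖u x‖ ^ (r - 1) * ‖u x - v x‖ ^ 2) (volume.restrict O) := by
    refine hM.mono' (mu.mul (md.norm.pow 2)) (Eventually.of_forall fun x => ?_)
    rw [Real.norm_of_nonneg (by positivity)]
    exact mono_pow_bound hr (norm_nonneg _) (norm_nonneg _) (norm_nonneg _) (norm_sub_le _ _)
  have I2 : Integrable (fun x => ‖v x‖ ^ (r - 1) * ‖u x - v x‖ ^ 2) (volume.restrict O) := by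
    refine hM.mono' (mv.mul (md.norm.pow 2)) (Eventually.of_forall fun x => ?_)
    rw [Real.norm_of_nonneg (by positivity), add_comm ‖u x‖]
    exact mono_pow_bound hr (norm_nonneg _) (norm_nonneg _) (norm_nonneg _)
      ((norm_sub_le _ _).trans_eq (add_comm _ _))
  have I0 : Integrable
      (fun x => ⟪(‖u x‖ ^ (r - 1)) • u x - (‖v x‖ ^ (r - 1)) • v x, u x - v x⟫)
      (volume.restrict O) :=
    (hM.const_mul 2).mono' (((mu.smul hu.1).sub (mv.smul hv.1)).inner md)
      (Eventually.of_forall fun x => mono_pow_bound2 hr _ _)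
  refine ⟨I0, ?_, ?_⟩
  · rw [ge_iff_le, ← integral_const_mul, ← integral_const_mul,
      ← integral_add (I1.const_mul _) (I2.const_mul _)]
    exact integral_mono ((I1.const_mul _).add (I2.const_mul _)) I0
      fun x => mono_pow_aux r hr _ _
  · have h1 : 0 ≤ ∫ x, ‖u x‖ ^ (r - 1) * ‖u x - v x‖ ^ 2 ∂(volume.restrict O) :=
      integral_nonneg fun x => by positivity
    have h2 : 0 ≤ ∫ x, ‖v x‖ ^ (r - 1) * ‖u x - v x‖ ^ 2 ∂(volume.restrict O) :=
      integral_nonneg fun x => by positivity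
    linarith
end

section
/- Let O be a bounded open subset of ℝ^d, let r ≥ 1 be real, and let u, v ∈ L^{r+1}(O; ℝ^d). Then ∫_O (|u|^{r−1}u − |v|^{r−1}v)·(u − v) dx ≥ (1/2^{r−1}) ‖u − v‖_{L^{r+1}(O;ℝ^d)}^{r+1}. -/
open Filter Topology MeasureTheory
open scoped RealInnerProductSpace

lemma aux_conv (s A B : ℝ) (hs : 0 ≤ s) (hA : 0 ≤ A) (hB : 0 ≤ B) :
    2 * (1 / 2 ^ s) * ((A + B) ^ s * (A + B)) ≤ 2 * (A ^ s * A + B ^ s * B) := by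
  have h := (convexOn_rpow (p := s + 1) (by linarith)).2 (Set.mem_Ici.2 hA) (Set.mem_Ici.2 hB)
    (show (0:ℝ) ≤ 1 / 2 by norm_num) (show (0:ℝ) ≤ 1 / 2 by norm_num) (by norm_num)
  simp only [smul_eq_mul] at h
  have e : (1 / 2 * A + 1 / 2 * B : ℝ) = (A + B) / 2 := by ring
  rw [e, Real.div_rpow (by positivity) (by norm_num),
    Real.rpow_add_one' (by positivity) (by positivity),
    Real.rpow_add_one' hA (by positivity), Real.rpow_add_one' hB (by positivity),
    Real.rpow_add_one' (by norm_num) (by positivity)] at h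
  have e2 : 2 * (1 / 2 ^ s) * ((A + B) ^ s * (A + B))
      = 4 * ((A + B) ^ s * (A + B) / (2 ^ s * 2)) := by
    have : (0:ℝ) < 2 ^ s := by positivity
    field_simp
    ring
  rw [e2]
  linarith

lemma aux_D (s A B : ℝ) (hs : 0 ≤ s) (hA : 0 ≤ A) (hB : 0 ≤ B) :
    0 ≤ (A ^ s - B ^ s) * (A - B) := by
  rcases le_total A B with h | h
  · exact mul_nonneg_of_nonpos_of_nonpos
      (by linarith [Real.rpow_le_rpow hA h hs]) (by linarith)
  · exact mul_nonneg (by linarith [Real.rpow_le_rpow hB h hs]) (by linarith)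

lemma aux_real (s A B t : ℝ) (hs : 0 ≤ s) (hA : 0 ≤ A) (hB : 0 ≤ B) (ht : 0 ≤ t)
    (htS : t ≤ A + B) :
    2 * (1 / 2 ^ s) * (t ^ s * t ^ 2) ≤
      (A ^ s + B ^ s) * t ^ 2 + (A ^ s - B ^ s) * (A ^ 2 - B ^ 2) := by
  rcases (add_nonneg hA hB).eq_or_lt with h0 | hS
  · have a0 : A = 0 := by linarith
    have b0 : B = 0 := by linarith
    have t0 : t = 0 := by linarith
    subst a0 b0 t0
    simp
  have hc := aux_conv s A B hs hA hB
  have hD := aux_D s A B hs hA hB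
  have hp := Real.rpow_le_rpow ht htS hs
  have hk : (0:ℝ) < 2 * (1 / 2 ^ s) := by positivity
  refine le_of_mul_le_mul_left ?_ hS
  have ht2 : t ^ 2 ≤ (A + B) ^ 2 := by gcongr
  have h1 := mul_le_mul_of_nonneg_right hc (sq_nonneg t)
  have h2 := mul_le_mul_of_nonneg_left ht2 hD
  have h3 : 2 * (1 / 2 ^ s) * (t ^ s * (A + B)) * t ^ 2
    ≤ 2 * (1 / 2 ^ s) * ((A + B) ^ s * (A + B)) * t ^ 2 := by gcongr
  linarith

lemma aux_inner {E : Type*} [NormedAddCommGroup E] [InnerProductSpace ℝ E]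
    (r : ℝ) (hr : 1 ≤ r) (a b : E) :
    (1 / 2 ^ (r - 1)) * ‖a - b‖ ^ (r + 1) ≤
      ⟪(‖a‖ ^ (r - 1)) • a - (‖b‖ ^ (r - 1)) • b, a - b⟫ := by
  have h := aux_real (r - 1) ‖a‖ ‖b‖ ‖a - b‖ (by linarith) (norm_nonneg _) (norm_nonneg _)
    (norm_nonneg _) (norm_sub_le a b)
  have e : ‖a - b‖ ^ (r + 1) = ‖a - b‖ ^ (r - 1) * ‖a - b‖ ^ 2 := by
    rw [← Real.rpow_natCast, ← Real.rpow_add_of_nonneg (norm_nonneg _) (by linarith) (by simp)]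
    congr 1
    push_cast
    ring
  have e2 := norm_sub_sq_real a b
  have e3 : ⟪(‖a‖ ^ (r - 1)) • a - (‖b‖ ^ (r - 1)) • b, a - b⟫
      = ‖a‖ ^ (r - 1) * (‖a‖ ^ 2 - ⟪a, b⟫) - ‖b‖ ^ (r - 1) * (⟪a, b⟫ - ‖b‖ ^ 2) := by
    simp only [inner_sub_left, inner_sub_right, real_inner_smul_left,
      real_inner_self_eq_norm_sq, real_inner_comm a b]
    ring
  rw [e, e3]
  have e4 : (⟪a, b⟫ : ℝ) = (‖a‖ ^ 2 + ‖b‖ ^ 2 - ‖a - b‖ ^ 2) / 2 := by linarith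
  rw [e4]
  linarith

lemma aux_bound {E : Type*} [NormedAddCommGroup E] [InnerProductSpace ℝ E]
    (r : ℝ) (hr : 1 ≤ r) (a b : E) :
    ‖(⟪(‖a‖ ^ (r - 1)) • a - (‖b‖ ^ (r - 1)) • b, a - b⟫ : ℝ)‖ ≤
      4 * (‖a‖ ^ (r + 1) + ‖b‖ ^ (r + 1)) := by
  set M := max ‖a‖ ‖b‖ with hM
  have ha : ‖a‖ ≤ M := le_max_left _ _
  have hb : ‖b‖ ≤ M := le_max_right _ _
  have hM0 : 0 ≤ M := (norm_nonneg a).trans ha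
  have hs : 0 ≤ r - 1 := by linarith
  have e : M ^ (r + 1) = M ^ (r - 1) * M ^ 2 := by
    rw [← Real.rpow_natCast, ← Real.rpow_add_of_nonneg hM0 (by linarith) (by simp)]
    congr 1
    push_cast
    ring
  have k : ∀ c : E, ‖c‖ ≤ M → ‖(‖c‖ ^ (r - 1)) • c‖ ≤ M ^ (r - 1) * M := by
    intro c hc
    rw [norm_smul, Real.norm_of_nonneg (by positivity)]
    gcongr
  have h1 : ‖(‖a‖ ^ (r - 1)) • a - (‖b‖ ^ (r - 1)) • b‖ ≤ 2 * (M ^ (r - 1) * M) := by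
    linarith [norm_sub_le ((‖a‖ ^ (r - 1)) • a) ((‖b‖ ^ (r - 1)) • b), k a ha, k b hb]
  have h2 : ‖a - b‖ ≤ 2 * M := by linarith [norm_sub_le a b]
  have h3 : M ^ (r + 1) ≤ ‖a‖ ^ (r + 1) + ‖b‖ ^ (r + 1) := by
    have := Real.rpow_nonneg (norm_nonneg a) (r + 1)
    have := Real.rpow_nonneg (norm_nonneg b) (r + 1)
    rcases max_choice ‖a‖ ‖b‖ with h | h <;> rw [hM, h] <;> linarith
  calc _ ≤ _ := norm_inner_le_norm _ _
    _ ≤ (2 * (M ^ (r - 1) * M)) * (2 * M) := by gcongr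
    _ = 4 * M ^ (r + 1) := by rw [e]; ring
    _ ≤ _ := by linarith

/-- Strong monotonicity of `u ↦ |u|^{r-1}u`: for `u, v ∈ L^{r+1}(O; ℝ^d)`,
`∫ (|u|^{r-1}u − |v|^{r-1}v)·(u − v) ≥ (1/2^{r-1}) ‖u − v‖_{L^{r+1}}^{r+1}`,
where `‖u − v‖_{L^{r+1}}^{r+1} = ∫ |u − v|^{r+1}`. -/
theorem strong_monotonicity_power_nonlinearity {d : ℕ}
    (O : Set (EuclideanSpace ℝ (Fin d))) (hO : IsOpen O) (hOb : Bornology.IsBounded O)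
    (r : ℝ) (hr : 1 ≤ r)
    (u v : EuclideanSpace ℝ (Fin d) → EuclideanSpace ℝ (Fin d))
    (hu : MemLp u (ENNReal.ofReal (r + 1)) (volume.restrict O))
    (hv : MemLp v (ENNReal.ofReal (r + 1)) (volume.restrict O)) :
    ∫ x, ⟪(‖u x‖ ^ (r - 1)) • u x - (‖v x‖ ^ (r - 1)) • v x, u x - v x⟫
        ∂(volume.restrict O) ≥
      (1 / 2 ^ (r - 1)) * ∫ x, ‖u x - v x‖ ^ (r + 1) ∂(volume.restrict O) := by
  have key : ∀ w : EuclideanSpace ℝ (Fin d) → EuclideanSpace ℝ (Fin d),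
      MemLp w (ENNReal.ofReal (r + 1)) (volume.restrict O) →
      Integrable (fun x => ‖w x‖ ^ (r + 1)) (volume.restrict O) := by
    intro w hw
    have := hw.integrable_norm_rpow (by simp; linarith) (by simp)
    rwa [ENNReal.toReal_ofReal (by linarith)] at this
  rw [ge_iff_le, ← integral_const_mul]
  refine integral_mono ((key _ (hu.sub hv)).const_mul _) ?_ (fun x => aux_inner r hr (u x) (v x))
  refine Integrable.mono' (((key u hu).add (key v hv)).const_mul 4) ?_
    (Eventually.of_forall fun x => aux_bound r hr (u x) (v x))
  have hm : ∀ w : EuclideanSpace ℝ (Fin d) → EuclideanSpace ℝ (Fin d),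
      MemLp w (ENNReal.ofReal (r + 1)) (volume.restrict O) →
      AEStronglyMeasurable (fun x => (‖w x‖ ^ (r - 1)) • w x) (volume.restrict O) := by
    intro w hw
    exact (hw.1.norm.aemeasurable.pow_const _).aestronglyMeasurable.smul hw.1
  exact ((hm u hu).sub (hm v hv)).inner (hu.1.sub hv.1)
end

section
/- Let q ≥ 1 be real. Then for all a, b ∈ ℝ^d, |(|a|^{q−1}a − |b|^{q−1}b)·(a − b)| ≤ q·2^{q−1}(|a|^{q−1} + |b|^{q−1})|a − b|². -/
open scoped RealInnerProductSpace

theorem aux_scalar (q : ℝ) (hq : 1 ≤ q) (s t : ℝ) (ht : 0 ≤ t) (hts : t ≤ s) :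
    (s ^ (q - 1) - t ^ (q - 1)) * t ≤ (q - 1) * s ^ (q - 1) * (s - t) := by
  rcases ht.eq_or_lt with h0 | h0
  · subst h0
    have := Real.rpow_nonneg hts (q - 1)
    have h1 : 0 ≤ q - 1 := by linarith
    simp only [mul_zero, sub_zero]
    positivity
  have hs : 0 < s := by linarith
  have hB := one_add_mul_self_le_rpow_one_add (s := t / s - 1) (by
    have : 0 ≤ t / s := by positivity
    linarith) hq
  have e1 : 1 + (t / s - 1) = t / s := by ring
  rw [e1, Real.div_rpow ht hs.le, le_div_iff₀ (by positivity)] at hB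
  have e2 : t ^ q = t ^ (q - 1) * t := by
    rw [Real.rpow_sub_one h0.ne']; field_simp
  have e3 : s ^ q = s ^ (q - 1) * s := by
    rw [Real.rpow_sub_one hs.ne']; field_simp
  rw [e2, e3] at hB
  have e4 : (1 + q * (t / s - 1)) * (s ^ (q - 1) * s)
      = s ^ (q - 1) * (s + q * (t - s)) := by
    field_simp
  rw [e4] at hB
  linarith

theorem aux_vec {d : ℕ} (q : ℝ) (hq : 1 ≤ q) (a b : EuclideanSpace ℝ (Fin d))
    (h : ‖b‖ ≤ ‖a‖) :
    |⟪(‖a‖ ^ (q - 1)) • a - (‖b‖ ^ (q - 1)) • b, a - b⟫| ≤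
        q * 2 ^ (q - 1) * (‖a‖ ^ (q - 1) + ‖b‖ ^ (q - 1)) * ‖a - b‖ ^ 2 := by
  have hA : 0 ≤ ‖a‖ ^ (q - 1) := by positivity
  have hB : 0 ≤ ‖b‖ ^ (q - 1) := by positivity
  have hmono : ‖b‖ ^ (q - 1) ≤ ‖a‖ ^ (q - 1) :=
    Real.rpow_le_rpow (norm_nonneg _) h (by linarith)
  have h2 : (1 : ℝ) ≤ 2 ^ (q - 1) := Real.one_le_rpow (by norm_num) (by linarith)
  have hs := aux_scalar q hq ‖a‖ ‖b‖ (norm_nonneg _) h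
  have hd : ‖a‖ - ‖b‖ ≤ ‖a - b‖ := norm_sub_norm_le a b
  have hn : ‖(‖a‖ ^ (q - 1)) • a - (‖b‖ ^ (q - 1)) • b‖ ≤ q * ‖a‖ ^ (q - 1) * ‖a - b‖ := by
    have e : (‖a‖ ^ (q - 1)) • a - (‖b‖ ^ (q - 1)) • b
        = (‖a‖ ^ (q - 1)) • (a - b) + (‖a‖ ^ (q - 1) - ‖b‖ ^ (q - 1)) • b := by
      module
    rw [e]
    refine (norm_add_le _ _).trans ?_
    rw [norm_smul, norm_smul, Real.norm_of_nonneg hA, Real.norm_of_nonneg (sub_nonneg.2 hmono)]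
    have := mul_le_mul_of_nonneg_left hd (mul_nonneg (sub_nonneg.2 hq) hA)
    linarith
  calc _ ≤ _ := abs_real_inner_le_norm _ _
    _ ≤ (q * ‖a‖ ^ (q - 1) * ‖a - b‖) * ‖a - b‖ := by gcongr
    _ = (q * 1 * ‖a‖ ^ (q - 1)) * ‖a - b‖ ^ 2 := by ring
    _ ≤ _ := by
      gcongr
      linarith

/-- Pointwise estimate: for `q ≥ 1` and `a, b ∈ ℝ^d`,
`|(|a|^{q-1}a − |b|^{q-1}b)·(a − b)| ≤ q·2^{q-1}(|a|^{q-1} + |b|^{q-1})|a − b|²`. -/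
theorem power_nonlinearity_pairing_estimate {d : ℕ} (q : ℝ) (hq : 1 ≤ q) :
    ∀ a b : EuclideanSpace ℝ (Fin d),
      |⟪(‖a‖ ^ (q - 1)) • a - (‖b‖ ^ (q - 1)) • b, a - b⟫| ≤
        q * 2 ^ (q - 1) * (‖a‖ ^ (q - 1) + ‖b‖ ^ (q - 1)) * ‖a - b‖ ^ 2 := by
  intro a b
  rcases le_total ‖b‖ ‖a‖ with h | h
  · exact aux_vec q hq a b h
  · have := aux_vec q hq b a h
    rw [← neg_sub ((‖a‖ ^ (q - 1)) • a), ← neg_sub a b, inner_neg_neg, norm_neg,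
      add_comm (‖b‖ ^ (q - 1))] at this
    exact this
end

section
/- Let (Ω, μ) be a measure space, let f, g : Ω → [0, ∞) be measurable, let 1 < q < r be real numbers, let κ ∈ ℝ, and let β > 0. If ∫_Ω f^{r−1}g² dμ < ∞ and ∫_Ω g² dμ < ∞, then |κ| q 2^{q−1} ∫_Ω f^{q−1}g² dμ ≤ (β/4)∫_Ω f^{r−1}g² dμ + ϱ_{1,r} ∫_Ω g² dμ, where ϱ_{1,r} = ((r−q)/(r−1)) · (4(q−1)/(β(r−1)))^{(q−1)/(r−q)} · (|κ| q 2^{q−1})^{(r−1)/(r−q)}. -/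
open MeasureTheory

theorem young_pw_aux (q r : ℝ) (hq : 1 < q) (hqr : q < r) (A β t : ℝ) (hβ : 0 < β)
    (hA : 0 ≤ A) (ht : 0 ≤ t) :
    A * t ^ (q - 1) ≤ (β / 4) * t ^ (r - 1) +
      ((r - q) / (r - 1)) * (4 * (q - 1) / (β * (r - 1))) ^ ((q - 1) / (r - q))
            * A ^ ((r - 1) / (r - q)) := by
  have a1 : 0 < q - 1 := by linarith
  have a2 : 0 < r - q := by linarith
  have a3 : 0 < r - 1 := by linarith
  have hD : 0 < 4 * (q - 1) / (β * (r - 1)) := by positivity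
  have hwD : (q - 1) / (r - 1) * (4 * (q - 1) / (β * (r - 1)))⁻¹ = β / 4 := by
    field_simp
  set D := 4 * (q - 1) / (β * (r - 1)) with hDdef
  have key := Real.geom_mean_le_arith_mean2_weighted (w₁ := (q - 1) / (r - 1))
    (w₂ := (r - q) / (r - 1)) (p₁ := D⁻¹ * t ^ (r - 1))
    (p₂ := D ^ ((q - 1) / (r - q)) * A ^ ((r - 1) / (r - q)))
    (by positivity) (by positivity) (by positivity) (by positivity) (by field_simp; ring)
  rw [Real.mul_rpow (by positivity) (by positivity), Real.mul_rpow (by positivity) (by positivity),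
    ← Real.rpow_mul ht, ← Real.rpow_mul hD.le, ← Real.rpow_mul hA, Real.inv_rpow hD.le] at key
  have e1 : (r - 1) * ((q - 1) / (r - 1)) = q - 1 := by field_simp
  have e2 : (q - 1) / (r - q) * ((r - q) / (r - 1)) = (q - 1) / (r - 1) := by field_simp
  have e3 : (r - 1) / (r - q) * ((r - q) / (r - 1)) = 1 := by field_simp
  rw [e1, e2, e3, Real.rpow_one] at key
  have hP : D ^ ((q - 1) / (r - 1)) ≠ 0 := by positivity
  have e4 : (D ^ ((q - 1) / (r - 1)))⁻¹ * t ^ (q - 1) * (D ^ ((q - 1) / (r - 1)) * A)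
      = A * t ^ (q - 1) := by field_simp
  rw [e4, ← mul_assoc, hwD, ← mul_assoc] at key
  exact key

/-- Young-type inequality: for measurable `f, g ≥ 0`, `1 < q < r`, `κ ∈ ℝ`, `β > 0`, if
`∫ f^{r−1}g² < ∞` and `∫ g² < ∞`, then
`|κ| q 2^{q−1} ∫ f^{q−1}g² ≤ (β/4)∫ f^{r−1}g² + ϱ_{1,r} ∫ g²` with
`ϱ_{1,r} = ((r−q)/(r−1)) (4(q−1)/(β(r−1)))^{(q−1)/(r−q)} (|κ| q 2^{q−1})^{(r−1)/(r−q)}`. -/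
theorem young_power_weight {Ω : Type*} [MeasurableSpace Ω] (μ : Measure Ω)
    (f g : Ω → ℝ) (hfm : Measurable f) (hgm : Measurable g)
    (hf0 : ∀ x, 0 ≤ f x) (hg0 : ∀ x, 0 ≤ g x)
    (q r : ℝ) (hq : 1 < q) (hqr : q < r) (κ β : ℝ) (hβ : 0 < β)
    (h1 : Integrable (fun x => f x ^ (r - 1) * g x ^ 2) μ)
    (h2 : Integrable (fun x => g x ^ 2) μ) :
    |κ| * q * 2 ^ (q - 1) * ∫ x, f x ^ (q - 1) * g x ^ 2 ∂μ ≤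
      (β / 4) * (∫ x, f x ^ (r - 1) * g x ^ 2 ∂μ)
        + (((r - q) / (r - 1)) * (4 * (q - 1) / (β * (r - 1))) ^ ((q - 1) / (r - q))
            * (|κ| * q * 2 ^ (q - 1)) ^ ((r - 1) / (r - q))) * (∫ x, g x ^ 2 ∂μ) := by
  have hA : 0 ≤ |κ| * q * 2 ^ (q - 1) := by
    have : 0 < q := by linarith
    positivity
  set A := |κ| * q * 2 ^ (q - 1) with hAdef
  rw [← integral_const_mul, ← integral_const_mul, ← integral_const_mul,
    ← integral_add (h1.const_mul _) (h2.const_mul _)]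
  apply integral_mono_of_nonneg
  · refine Filter.Eventually.of_forall fun x => ?_
    have := Real.rpow_nonneg (hf0 x) (q - 1)
    show 0 ≤ A * (f x ^ (q - 1) * g x ^ 2)
    positivity
  · exact (h1.const_mul _).add (h2.const_mul _)
  · refine Filter.Eventually.of_forall fun x => ?_
    have h := mul_le_mul_of_nonneg_right
      (young_pw_aux q r hq hqr A β (f x) hβ hA (hf0 x)) (sq_nonneg (g x))
    simp only
    linarith
end

section
/- Let (Γ, μ) be a finite measure space and let j : Γ × ℝ^d → ℝ satisfy: (H1) for every ξ ∈ ℝ^d the map x ↦ j(x, ξ) is measurable and j(·, 0) ∈ L¹(Γ, μ); (H2) for μ-a.e. x ∈ Γ the map ξ ↦ j(x, ξ) is locally Lipschitz on ℝ^d; (H3) there exist k₀, k₁ ≥ 0 such that for μ-a.e. x and all ξ ∈ ℝ^d, every η ∈ ∂j(x, ξ) satisfies |η| ≤ k₀ + k₁|ξ|. Define J(v) := ∫_Γ j(x, v(x)) dμ(x) for v ∈ L²(Γ, μ; ℝ^d), and assume for every u, v ∈ L²(Γ, μ; ℝ^d) the map x ↦ j⁰(x, u(x); v(x)) is measurable.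 Then every z ∈ L²(Γ, μ; ℝ^d) belonging to the Clarke subdifferential ∂J(v) (i.e., satisfying (z, w)_{L²} ≤ J⁰(v; w) for all w ∈ L²(Γ, μ; ℝ^d)) obeys the bound ‖z‖_{L²} ≤ k₀ μ(Γ)^{1/2} + k₁ ‖v‖_{L²}. -/
open Filter Topology MeasureTheory
open scoped RealInnerProductSpace

theorem cl_quot_bdd {X : Type*} [NormedAddCommGroup X] [NormedSpace ℝ X]
    {f : X → ℝ} (hf : LocallyLipschitz f) (x v : X) :
    ∃ C : ℝ, ∀ᶠ p : X × ℝ in (𝓝 x) ×ˢ (𝓝[>] (0 : ℝ)),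
      |(f (p.1 + p.2 • v) - f p.1) / p.2| ≤ C := by
  obtain ⟨K, t, ht, hK⟩ := hf x
  refine ⟨K * ‖v‖, ?_⟩
  have h1 : Tendsto (fun p : X × ℝ => p.1) ((𝓝 x) ×ˢ (𝓝[>] (0 : ℝ))) (𝓝 x) := tendsto_fst
  have h2 : Tendsto (fun p : X × ℝ => p.2) ((𝓝 x) ×ˢ (𝓝[>] (0 : ℝ))) (𝓝[>] 0) := tendsto_snd
  have h3 : Tendsto (fun p : X × ℝ => p.1 + p.2 • v) ((𝓝 x) ×ˢ (𝓝[>] (0 : ℝ))) (𝓝 x) := by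
    have := h1.add ((h2.mono_right nhdsWithin_le_nhds).smul_const v)
    simpa using this
  filter_upwards [h1 ht, h3 ht, h2 self_mem_nhdsWithin] with p ha hb hc
  have hc : 0 < p.2 := hc
  have := hK.dist_le_mul _ hb _ ha
  rw [Real.dist_eq, dist_eq_norm, add_sub_cancel_left, norm_smul, Real.norm_of_nonneg hc.le] at this
  rw [abs_div, abs_of_pos hc, div_le_iff₀ hc]
  linarith

theorem cl_le {X : Type*} [NormedAddCommGroup X] [NormedSpace ℝ X]
    {f : X → ℝ} {x v : X} {C c : ℝ}
    (hC : ∀ᶠ p : X × ℝ in (𝓝 x) ×ˢ (𝓝[>] (0 : ℝ)), |(f (p.1 + p.2 • v) - f p.1) / p.2| ≤ C)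
    (h : ∀ᶠ p : X × ℝ in (𝓝 x) ×ˢ (𝓝[>] (0 : ℝ)), (f (p.1 + p.2 • v) - f p.1) / p.2 ≤ c) :
    clarkeDeriv f x v ≤ c := by
  refine limsup_le_of_le (IsBoundedUnder.isCoboundedUnder_le ?_) h
  refine ⟨-C, ?_⟩
  rw [eventually_map]
  filter_upwards [hC] with p hp
  exact (abs_le.1 hp).1

theorem cl_ev {X : Type*} [NormedAddCommGroup X] [NormedSpace ℝ X]
    {f : X → ℝ} (hf : LocallyLipschitz f) {x v : X} {c : ℝ} (h : clarkeDeriv f x v < c) :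
    ∀ᶠ p : X × ℝ in (𝓝 x) ×ˢ (𝓝[>] (0 : ℝ)), (f (p.1 + p.2 • v) - f p.1) / p.2 < c := by
  refine eventually_lt_of_limsup_lt h ?_
  obtain ⟨C, hC⟩ := cl_quot_bdd hf x v
  refine ⟨C, ?_⟩
  rw [eventually_map]
  filter_upwards [hC] with p hp
  exact (abs_le.1 hp).2

theorem cl_add {X : Type*} [NormedAddCommGroup X] [NormedSpace ℝ X]
    {f : X → ℝ} (hf : LocallyLipschitz f) (x u v : X) :
    clarkeDeriv f x (u + v) ≤ clarkeDeriv f x u + clarkeDeriv f x v := by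
  refine le_of_forall_pos_le_add fun ε hε => ?_
  obtain ⟨C, hC⟩ := cl_quot_bdd hf x (u + v)
  refine cl_le hC ?_
  have e1 := cl_ev hf (show clarkeDeriv f x u < clarkeDeriv f x u + ε / 2 by linarith)
  have e2 := cl_ev hf (show clarkeDeriv f x v < clarkeDeriv f x v + ε / 2 by linarith)
  have h1 : Tendsto (fun p : X × ℝ => p.1) ((𝓝 x) ×ˢ (𝓝[>] (0 : ℝ))) (𝓝 x) := tendsto_fst
  have h2 : Tendsto (fun p : X × ℝ => p.2) ((𝓝 x) ×ˢ (𝓝[>] (0 : ℝ))) (𝓝[>] 0) := tendsto_snd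
  have h3 : Tendsto (fun p : X × ℝ => p.1 + p.2 • u) ((𝓝 x) ×ˢ (𝓝[>] (0 : ℝ))) (𝓝 x) := by
    have := h1.add ((h2.mono_right nhdsWithin_le_nhds).smul_const u)
    simpa using this
  filter_upwards [e1, (h3.prodMk h2).eventually e2] with p ha hb
  have : (f (p.1 + p.2 • (u + v)) - f p.1) / p.2 =
    (f (p.1 + p.2 • u) - f p.1) / p.2 +
      (f (p.1 + p.2 • u + p.2 • v) - f (p.1 + p.2 • u)) / p.2 := by
    rw [smul_add, ← add_assoc]; ring
  linarith

theorem cl_smul_le {X : Type*} [NormedAddCommGroup X] [NormedSpace ℝ X]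
    {f : X → ℝ} (hf : LocallyLipschitz f) (x v : X) {t : ℝ} (ht : 0 < t) :
    clarkeDeriv f x (t • v) ≤ t * clarkeDeriv f x v := by
  refine le_of_forall_pos_le_add fun ε hε => ?_
  obtain ⟨C, hC⟩ := cl_quot_bdd hf x (t • v)
  refine cl_le hC ?_
  have e1 := cl_ev hf (show clarkeDeriv f x v < clarkeDeriv f x v + ε / t by
    have := div_pos hε ht; linarith)
  have h1 : Tendsto (fun p : X × ℝ => p.1) ((𝓝 x) ×ˢ (𝓝[>] (0 : ℝ))) (𝓝 x) := tendsto_fst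
  have h2 : Tendsto (fun p : X × ℝ => p.2) ((𝓝 x) ×ˢ (𝓝[>] (0 : ℝ))) (𝓝[>] 0) := tendsto_snd
  have h3 : Tendsto (fun p : X × ℝ => p.2 * t) ((𝓝 x) ×ˢ (𝓝[>] (0 : ℝ))) (𝓝[>] 0) := by
    refine tendsto_nhdsWithin_iff.2 ⟨?_, ?_⟩
    · have := (h2.mono_right nhdsWithin_le_nhds).mul_const t
      simpa using this
    · filter_upwards [h2 self_mem_nhdsWithin] with p hp
      exact mul_pos hp ht
  filter_upwards [(h1.prodMk h3).eventually e1, h2 self_mem_nhdsWithin] with p ha hp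
  have hp : 0 < p.2 := hp
  have : (f (p.1 + p.2 • t • v) - f p.1) / p.2 =
    t * ((f (p.1 + (p.2 * t) • v) - f p.1) / (p.2 * t)) := by
    rw [smul_smul]; field_simp
  rw [this]
  have := mul_le_mul_of_nonneg_left ha.le ht.le
  rw [mul_add, mul_div_cancel₀ _ ht.ne'] at this
  exact this

theorem cl_smul {X : Type*} [NormedAddCommGroup X] [NormedSpace ℝ X]
    {f : X → ℝ} (hf : LocallyLipschitz f) (x v : X) {t : ℝ} (ht : 0 < t) :
    clarkeDeriv f x (t • v) = t * clarkeDeriv f x v := by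
  refine le_antisymm (cl_smul_le hf x v ht) ?_
  have := cl_smul_le hf x (t • v) (inv_pos.2 ht)
  rw [smul_smul, inv_mul_cancel₀ ht.ne', one_smul] at this
  have := mul_le_mul_of_nonneg_left this ht.le
  rwa [← mul_assoc, mul_inv_cancel₀ ht.ne', one_mul] at this

theorem cl_bound {E : Type*} [NormedAddCommGroup E] [InnerProductSpace ℝ E]
    [FiniteDimensional ℝ E] {f : E → ℝ} (hf : LocallyLipschitz f) (x : E) {M : ℝ}
    (hM : ∀ η ∈ clarkeSubdiffInner f x, ‖η‖ ≤ M) (w : E) :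
    clarkeDeriv f x w ≤ M * ‖w‖ := by
  have N0 : clarkeDeriv f x 0 = 0 := by
    have := cl_smul hf x 0 (t := 2) (by norm_num)
    rw [smul_zero] at this; linarith
  by_cases hw : w = 0
  · subst hw; simp [N0]
  let g : E →ₗ.[ℝ] ℝ := LinearPMap.mkSpanSingleton w (clarkeDeriv f x w) hw
  obtain ⟨G, hG1, hG2⟩ := exists_extension_of_le_sublinear g (clarkeDeriv f x)
    (fun c hc y => cl_smul hf x y hc) (cl_add hf x) (by
      rintro ⟨y, hy⟩
      obtain ⟨c, rfl⟩ := Submodule.mem_span_singleton.1 hy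
      have : g ⟨c • w, hy⟩ = c * clarkeDeriv f x w :=
        LinearPMap.mkSpanSingleton'_apply _ _ _ _ _
      rw [this]
      change c * clarkeDeriv f x w ≤ clarkeDeriv f x (c • w)
      rcases lt_trichotomy c 0 with hc | hc | hc
      · have h1 := cl_add hf x (c • w) ((-c) • w)
        rw [← add_smul, add_neg_cancel, zero_smul, N0, cl_smul hf x w (neg_pos.2 hc)] at h1
        linarith
      · simp [hc, N0]
      · exact (cl_smul hf x w hc).ge)
  have hGw : G w = clarkeDeriv f x w := by
    have h1 := hG1 ⟨w, Submodule.mem_span_singleton_self w⟩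
    rw [show g ⟨w, Submodule.mem_span_singleton_self w⟩ = clarkeDeriv f x w from
      LinearPMap.mkSpanSingleton_apply ℝ ℝ hw _] at h1
    exact h1
  have : CompleteSpace E := FiniteDimensional.complete ℝ E
  let η := (InnerProductSpace.toDual ℝ E).symm (LinearMap.toContinuousLinearMap G)
  have hη : ∀ y, ⟪η, y⟫ = G y := fun y => by
    simp [η, InnerProductSpace.toDual_symm_apply]
  have hmem : η ∈ clarkeSubdiffInner f x := fun y => by rw [hη]; exact hG2 y
  rw [← hGw, ← hη]
  exact (real_inner_le_norm _ _).trans (mul_le_mul_of_nonneg_right (hM η hmem) (norm_nonneg _))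

theorem cl_mvt {E : Type*} [NormedAddCommGroup E] [InnerProductSpace ℝ E]
    [FiniteDimensional ℝ E] {f : E → ℝ} (hf : LocallyLipschitz f) {k₀ k₁ R : ℝ}
    (hk₁ : 0 ≤ k₁)
    (hg : ∀ ξ, ∀ η ∈ clarkeSubdiffInner f ξ, ‖η‖ ≤ k₀ + k₁ * ‖ξ‖) {a b : E}
    (ha : ‖a‖ ≤ R) (hb : ‖b‖ ≤ R) : f b - f a ≤ (k₀ + k₁ * R) * ‖b - a‖ := by
  have key := image_le_of_liminf_slope_right_le_deriv_boundary
    (f := fun t : ℝ => f (a + t • (b - a))) (a := 0) (b := 1)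
    (B := fun t => f a + t * ((k₀ + k₁ * R) * ‖b - a‖)) (B' := fun _ => (k₀ + k₁ * R) * ‖b - a‖)
    (Continuous.continuousOn (hf.continuous.comp (by fun_prop))) (by simp) (by fun_prop)
    (fun x _ => by
      have := ((hasDerivAt_id x).mul_const ((k₀ + k₁ * R) * ‖b - a‖)).const_add (f a)
      simpa using this.hasDerivWithinAt)
    (fun t ht r hr => by
      apply Eventually.frequently
      have hn : ‖a + t • (b - a)‖ ≤ R := by
        have : a + t • (b - a) = (1 - t) • a + t • b := by module
        rw [this]
        refine (norm_add_le _ _).trans ?_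
        rw [norm_smul, norm_smul, Real.norm_of_nonneg ht.1,
          Real.norm_of_nonneg (by linarith [ht.2])]
        nlinarith [ht.1, ht.2]
      have hlt : clarkeDeriv f (a + t • (b - a)) (b - a) < r := by
        refine lt_of_le_of_lt (cl_bound hf _ (hg _) _) (lt_of_le_of_lt ?_ hr)
        gcongr
      have ev := cl_ev hf hlt
      have tt : Tendsto (fun s : ℝ => (a + t • (b - a), s - t)) (𝓝[>] t)
          ((𝓝 (a + t • (b - a))) ×ˢ (𝓝[>] (0 : ℝ))) := by
        refine tendsto_const_nhds.prodMk (tendsto_nhdsWithin_iff.2 ⟨?_, ?_⟩)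
        · have : Tendsto (fun s : ℝ => s - t) (𝓝 t) (𝓝 (t - t)) :=
            (continuous_id.sub continuous_const).tendsto t
          rw [sub_self] at this
          exact this.mono_left nhdsWithin_le_nhds
        · filter_upwards [self_mem_nhdsWithin] with s hs
          exact sub_pos.2 (show t < s from hs)
      filter_upwards [tt.eventually ev] with s hs
      rw [slope_def_field]
      rw [add_assoc, ← add_smul, add_sub_cancel] at hs
      exact hs)
  have := key (x := 1) (by simp)
  simp only [one_smul, one_mul, add_sub_cancel] at this
  linarith

theorem l2_cs {Γ : Type*} [MeasurableSpace Γ] {μ : Measure Γ} {f g : Γ → ℝ}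
    (hf : MemLp f 2 μ) (hg : MemLp g 2 μ) :
    ∫ x, f x * g x ∂μ ≤ (eLpNorm f 2 μ).toReal * (eLpNorm g 2 μ).toReal := by
  have h := real_inner_le_norm (hf.toLp f) (hg.toLp g)
  rw [L2.inner_def, Lp.norm_toLp, Lp.norm_toLp] at h
  refine le_trans (le_of_eq (integral_congr_ae ?_)) h
  filter_upwards [hf.coeFn_toLp, hg.coeFn_toLp] with x h1 h2
  rw [h1, h2]
  simp [mul_comm]

theorem carath {Γ E : Type*} [MeasurableSpace Γ] {μ : Measure Γ}
    [NormedAddCommGroup E] [MeasurableSpace E] [BorelSpace E] [SecondCountableTopology E]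
    (j : Γ → E → ℝ) (hmeas : ∀ ξ, Measurable (fun x => j x ξ))
    (hc : ∀ᵐ x ∂μ, Continuous (j x)) {w : Γ → E} (hw : AEMeasurable w μ) :
    AEStronglyMeasurable (fun x => j x (w x)) μ := by
  obtain ⟨t, hst, ht, h0⟩ := exists_measurable_superset_of_null (ae_iff.1 hc)
  classical
  let u : E → Γ → ℝ := fun ξ => tᶜ.indicator (fun x => j x ξ)
  have hu : Measurable (Function.uncurry u) := by
    refine measurable_uncurry_of_continuous_of_measurable (fun x => ?_)
      (fun ξ => (hmeas ξ).indicator ht.compl)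
    by_cases hx : x ∈ t
    · simp only [u, Set.indicator, Set.mem_compl_iff, hx]; simp [continuous_const]
    · have : Continuous (j x) := by
        by_contra h; exact hx (hst h)
      simpa [u, Set.indicator, hx] using this
  have : AEMeasurable (fun x => Function.uncurry u (w x, x)) μ :=
    hu.comp_aemeasurable (hw.prodMk aemeasurable_id)
  refine this.aestronglyMeasurable.congr ?_
  have : ∀ᵐ x ∂μ, x ∉ t := measure_eq_zero_iff_ae_notMem.1 h0
  filter_upwards [this] with x hx
  simp [u, Set.indicator, hx]

/-- Under (H1)–(H3), every element `z` of the Clarke subdifferential of the integral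
functional `J(v) = ∫ j(x, v(x)) dμ` at `v ∈ L²(Γ, μ; ℝ^d)` satisfies
`‖z‖_{L²} ≤ k₀ μ(Γ)^{1/2} + k₁ ‖v‖_{L²}`. -/
theorem clarkeSubdiff_integral_functional_bound {d : ℕ}
    {Γ : Type*} [MeasurableSpace Γ] (μ : Measure Γ) [IsFiniteMeasure μ]
    (j : Γ → EuclideanSpace ℝ (Fin d) → ℝ)
    (hmeas : ∀ ξ : EuclideanSpace ℝ (Fin d), Measurable (fun x => j x ξ))
    (hint0 : Integrable (fun x => j x 0) μ)
    (hlip : ∀ᵐ x ∂μ, LocallyLipschitz (j x))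
    (k₀ k₁ : ℝ) (hk₀ : 0 ≤ k₀) (hk₁ : 0 ≤ k₁)
    (hgrowth : ∀ᵐ x ∂μ, ∀ ξ : EuclideanSpace ℝ (Fin d),
      ∀ η ∈ clarkeSubdiffInner (j x) ξ, ‖η‖ ≤ k₀ + k₁ * ‖ξ‖)
    (hmeas' : ∀ u v : Lp (EuclideanSpace ℝ (Fin d)) 2 μ,
      Measurable (fun x => clarkeDeriv (j x) (u x) (v x)))
    (v z : Lp (EuclideanSpace ℝ (Fin d)) 2 μ)
    (hz : ∀ w : Lp (EuclideanSpace ℝ (Fin d)) 2 μ,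
      ⟪z, w⟫ ≤ clarkeDeriv
        (fun w' : Lp (EuclideanSpace ℝ (Fin d)) 2 μ => ∫ x, j x (w' x) ∂μ) v w) :
    ‖z‖ ≤ k₀ * Real.sqrt ((μ Set.univ).toReal) + k₁ * ‖v‖ := by
  set J := (fun w' : Lp (EuclideanSpace ℝ (Fin d)) 2 μ => ∫ x, j x (w' x) ∂μ) with hJ
  have hpt : ∀ᵐ x ∂μ, ∀ R a b, ‖a‖ ≤ R → ‖b‖ ≤ R → |j x b - j x a| ≤ (k₀ + k₁ * R) * ‖b - a‖ := by
    filter_upwards [hlip, hgrowth] with x h1 h2 R a b ha hb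
    refine abs_sub_le_iff.2 ⟨cl_mvt h1 hk₁ h2 ha hb, ?_⟩
    rw [norm_sub_rev]
    exact cl_mvt h1 hk₁ h2 hb ha
  have hn : ∀ y : Lp (EuclideanSpace ℝ (Fin d)) 2 μ, MemLp (fun x => ‖y x‖) 2 μ :=
    fun y => (Lp.memLp y).norm
  have h1 : MemLp (fun _ : Γ => (1 : ℝ)) 2 μ := memLp_const 1
  have hnn : ∀ y : Lp (EuclideanSpace ℝ (Fin d)) 2 μ,
      (eLpNorm (fun x => ‖y x‖) 2 μ).toReal = ‖y‖ := fun y => by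
    rw [eLpNorm_norm, Lp.norm_def]
  have h1n : (eLpNorm (fun _ : Γ => (1 : ℝ)) 2 μ).toReal = Real.sqrt ((μ Set.univ).toReal) := by
    rw [eLpNorm_const' _ (by norm_num) (by norm_num), Real.sqrt_eq_rpow]
    simp [ENNReal.toReal_rpow]
  have hmul : ∀ {f g : Γ → ℝ}, MemLp f 2 μ → MemLp g 2 μ →
      Integrable (fun x => f x * g x) μ := fun hf hg => hf.integrable_mul hg
  have hjm : ∀ y : Lp (EuclideanSpace ℝ (Fin d)) 2 μ,
      AEStronglyMeasurable (fun x => j x (y x)) μ := fun y =>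
    carath j hmeas (hlip.mono fun x h => h.continuous) (Lp.aestronglyMeasurable y).aemeasurable
  have hji : ∀ y : Lp (EuclideanSpace ℝ (Fin d)) 2 μ, Integrable (fun x => j x (y x)) μ := by
    intro y
    have hd : Integrable (fun x => j x (y x) - j x 0) μ := by
      refine Integrable.mono'
        (((hmul h1 (hn y)).const_mul k₀).add ((hmul (hn y) (hn y)).const_mul k₁))
        ((hjm y).sub hint0.aestronglyMeasurable) ?_
      filter_upwards [hpt] with x hx
      have := hx ‖y x‖ 0 (y x) (by simp) le_rfl
      rw [sub_zero] at this
      rw [Real.norm_eq_abs]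
      refine this.trans (le_of_eq ?_)
      simp only [Pi.add_apply]
      ring
    refine (hd.add hint0).congr (Eventually.of_forall fun x => ?_)
    simp
  have hJd : ∀ y h : Lp (EuclideanSpace ℝ (Fin d)) 2 μ, |J (y + h) - J y| ≤
      ‖h‖ * (k₀ * Real.sqrt ((μ Set.univ).toReal) + k₁ * (‖y‖ + ‖h‖)) := by
    intro y h
    have i1 := (hmul h1 (hn h)).const_mul k₀
    have i2 := (hmul (hn y) (hn h)).const_mul k₁
    have i3 := (hmul (hn h) (hn h)).const_mul k₁
    have c1 := l2_cs h1 (hn h)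
    have c2 := l2_cs (hn y) (hn h)
    have c3 := l2_cs (hn h) (hn h)
    rw [hnn, h1n, integral_const_mul] at c1
    rw [hnn, hnn] at c2
    rw [hnn] at c3
    simp only [hJ]
    rw [← integral_sub (hji _) (hji _), ← Real.norm_eq_abs]
    have := norm_integral_le_of_norm_le ((i1.add i2).add i3) (μ := μ)
      (f := fun x => j x ((y + h : Lp (EuclideanSpace ℝ (Fin d)) 2 μ) x) - j x (y x)) (by
        filter_upwards [hpt, Lp.coeFn_add y h] with x hx hadd
        rw [hadd, Pi.add_apply]
        have := hx (‖y x‖ + ‖h x‖) (y x) (y x + h x) (by simp) (norm_add_le _ _)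
        rw [add_sub_cancel_left] at this
        rw [Real.norm_eq_abs]
        refine this.trans (le_of_eq ?_)
        simp only [Pi.add_apply]
        ring)
    refine this.trans ?_
    rw [integral_add' (i1.add i2) i3, integral_add' i1 i2, integral_const_mul, integral_const_mul,
      integral_const_mul, integral_const_mul]
    have m1 := mul_le_mul_of_nonneg_left c1 hk₀
    have m2 := mul_le_mul_of_nonneg_left c2 hk₁
    have m3 := mul_le_mul_of_nonneg_left c3 hk₁
    have m4 := add_le_add (add_le_add m1 m2) m3
    refine m4.trans (le_of_eq ?_)
    ring
  set S := Real.sqrt ((μ Set.univ).toReal) with hS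
  have hB : clarkeDeriv J v z ≤ ‖z‖ * (k₀ * S + k₁ * ‖v‖) := by
    refine le_of_forall_pos_le_add fun ε hε => ?_
    have t1 : Tendsto (fun p : Lp (EuclideanSpace ℝ (Fin d)) 2 μ × ℝ => p.1)
      ((𝓝 v) ×ˢ (𝓝[>] (0 : ℝ))) (𝓝 v) := tendsto_fst
    have t2 : Tendsto (fun p : Lp (EuclideanSpace ℝ (Fin d)) 2 μ × ℝ => p.2)
      ((𝓝 v) ×ˢ (𝓝[>] (0 : ℝ))) (𝓝[>] 0) := tendsto_snd
    have t3 : Tendsto (fun p : Lp (EuclideanSpace ℝ (Fin d)) 2 μ × ℝ =>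
        ‖z‖ * (k₀ * S + k₁ * (‖p.1‖ + p.2 * ‖z‖)))
        ((𝓝 v) ×ˢ (𝓝[>] (0 : ℝ))) (𝓝 (‖z‖ * (k₀ * S + k₁ * (‖v‖ + 0 * ‖z‖)))) :=
      (((t1.norm.add ((t2.mono_right nhdsWithin_le_nhds).mul_const _)).const_mul k₁).const_add
        _).const_mul _
    rw [zero_mul, add_zero] at t3
    have ev : ∀ᶠ p : Lp (EuclideanSpace ℝ (Fin d)) 2 μ × ℝ in (𝓝 v) ×ˢ (𝓝[>] (0 : ℝ)),
        |(J (p.1 + p.2 • z) - J p.1) / p.2| ≤ ‖z‖ * (k₀ * S + k₁ * ‖v‖) + ε := by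
      filter_upwards [t3.eventually_lt_const (lt_add_of_pos_right _ hε),
        t2 self_mem_nhdsWithin] with p hp hp2
      have hp2 : 0 < p.2 := hp2
      refine le_trans ?_ hp.le
      rw [abs_div, abs_of_pos hp2, div_le_iff₀ hp2]
      refine (hJd _ _).trans (le_of_eq ?_)
      rw [norm_smul, Real.norm_of_nonneg hp2.le]
      ring
    exact cl_le ev (ev.mono fun p hp => (le_abs_self _).trans hp)
  have hfin := (hz z).trans hB
  rw [real_inner_self_eq_norm_mul_norm] at hfin
  rcases (norm_nonneg z).eq_or_lt with h0 | h0
  · rw [← h0]; positivity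
  · exact le_of_mul_le_mul_left hfin h0
end
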